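/- Let x > 0 be a real number and let α be a complex number that is not a nonpositive integer (α ∉ {0, −1, −2, …}). Then the series ∑_{n=0}^∞ (−x)^n / (n!·(n + α)) converges absolutely, the integral ∫₁^∞ t^{α−1} e^{−xt} dt converges absolutely, and ∑_{n=0}^∞ (−x)^n / (n!·(n + α)) + ∫₁^∞ t^{α−1} e^{−xt} dt = x^{−α} · Γ(α), where x^{−α} = exp(−α·log x). -/

import Mathlib

open Complex Real MeasureTheory Set

lemma aux_sum (x : ℝ) (α : ℂ) :
    Summable fun n : ℕ => ‖(-(x : ℂ)) ^ n / ((Nat.factorial n : ℂ) * ((n : ℂ) + α))‖ := by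
  have h := NormedSpace.norm_expSeries_div_summable (-(x : ℂ))
  refine Summable.of_norm_bounded_eventually_nat h ?_
  obtain ⟨N, hN⟩ := exists_nat_ge (1 + ‖α‖)
  filter_upwards [Filter.eventually_ge_atTop N] with n hn
  have h1 : (1 : ℝ) ≤ ‖(n : ℂ) + α‖ := by
    have h2 : ‖(n : ℂ)‖ ≤ ‖(n : ℂ) + α‖ + ‖α‖ := by
      simpa using norm_sub_le ((n : ℂ) + α) α
    have h3 : (N : ℝ) ≤ n := by exact_mod_cast hn
    rw [Complex.norm_natCast] at h2
    linarith
  rw [norm_norm, ← div_div, norm_div]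
  exact div_le_self (norm_nonneg _) h1

lemma aux_cont (x : ℝ) (s : ℂ) :
    ContinuousOn (fun t : ℝ => (t : ℂ) ^ s * Real.exp (-x * t)) (Ici (1 : ℝ)) := by
  intro t ht
  have ht' : t ≠ 0 := by have : (1 : ℝ) ≤ t := ht; linarith
  refine ContinuousAt.continuousWithinAt (ContinuousAt.mul ?_ (by fun_prop))
  exact Complex.continuousAt_ofReal_cpow_const _ _ (Or.inr ht')

lemma aux_int (x : ℝ) (hx : 0 < x) (s : ℂ) :
    IntegrableOn (fun t : ℝ => (t : ℂ) ^ s * Real.exp (-x * t)) (Ioi (1 : ℝ)) := by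
  have hx2 : 0 < x / 2 := by positivity
  have hO : (fun t : ℝ => (t : ℂ) ^ s * (Real.exp (-x * t) : ℂ)) =O[Filter.atTop]
      fun t => Real.exp (-(x / 2) * t) := by
    have h1 := ((isLittleO_rpow_exp_pos_mul_atTop s.re hx2).isBigO).mul
      (Asymptotics.isBigO_refl (fun t : ℝ => Real.exp (-x * t)) Filter.atTop)
    refine Asymptotics.IsBigO.trans ?_ (h1.congr_right ?_)
    · refine Asymptotics.IsBigO.of_norm_eventuallyLE ?_
      filter_upwards [Filter.eventually_gt_atTop 0] with t ht
      rw [norm_mul, Complex.norm_cpow_eq_rpow_re_of_pos ht, Complex.norm_real, Real.norm_eq_abs,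
        abs_of_pos (Real.exp_pos _)]
    · intro t
      rw [← Real.exp_add]; congr 1; ring
  have := (aux_cont x s).locallyIntegrableOn (μ := volume) measurableSet_Ici
  exact (this.integrableOn_of_isBigO_atTop hO
    ⟨Ioi (x/2), Filter.Ioi_mem_atTop _, exp_neg_integrableOn_Ioi _ hx2⟩).mono_set Ioi_subset_Ici_self

lemma aux_recI (x : ℝ) (hx : 0 < x) (α : ℂ) (hα : α ≠ 0) :
    α * (∫ t in Ioi (1 : ℝ), (t : ℂ) ^ (α - 1) * Real.exp (-x * t)) =
      x * (∫ t in Ioi (1 : ℝ), (t : ℂ) ^ (α + 1 - 1) * Real.exp (-x * t)) - Complex.exp (-x) := by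
  have i1 := (aux_int x hx (α - 1)).const_mul α
  have i2 := (aux_int x hx (α + 1 - 1)).const_mul (x : ℂ)
  have key := integral_Ioi_of_hasDerivAt_of_tendsto' (a := (1 : ℝ)) (m := (0 : ℂ))
    (f := fun t : ℝ => (t : ℂ) ^ α * (Real.exp (-x * t) : ℂ))
    (f' := fun t : ℝ => α * ((t : ℂ) ^ (α - 1) * (Real.exp (-x * t) : ℂ)) -
      x * ((t : ℂ) ^ (α + 1 - 1) * (Real.exp (-x * t) : ℂ))) ?_ (i1.sub i2) ?_
  · rw [integral_sub i1 i2, integral_const_mul, integral_const_mul] at key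
    have e : (0 : ℂ) - ((1 : ℝ) : ℂ) ^ α * (Real.exp (-x * 1) : ℂ) = - Complex.exp (-x) := by
      simp
    rw [e] at key
    linear_combination key
  · intro t ht
    have ht' : t ≠ 0 := by have : (1 : ℝ) ≤ t := ht; linarith
    have d1 := hasDerivAt_ofReal_cpow_const ht' hα
    have d2 : HasDerivAt (fun t : ℝ => Real.exp (-x * t)) (Real.exp (-x * t) * (-x)) t := by
      simpa using ((hasDerivAt_id t).const_mul (-x)).exp
    have d3 := d1.mul d2.ofReal_comp
    refine d3.congr_deriv ?_
    rw [add_sub_cancel_right]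
    push_cast
    ring
  · rw [tendsto_zero_iff_norm_tendsto_zero]
    refine (tendsto_rpow_mul_exp_neg_mul_atTop_nhds_zero α.re x hx).congr' ?_
    filter_upwards [Filter.eventually_gt_atTop 0] with t ht
    rw [norm_mul, Complex.norm_cpow_eq_rpow_re_of_pos ht, Complex.norm_real, Real.norm_eq_abs,
        abs_of_pos (Real.exp_pos _)]

lemma aux_exp (z : ℂ) : HasSum (fun n : ℕ => z ^ n / (Nat.factorial n : ℂ)) (Complex.exp z) := by
  rw [Complex.exp_eq_exp_ℂ]
  exact NormedSpace.expSeries_div_hasSum_exp z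

lemma aux_recS (x : ℝ) (α : ℂ) (hα : ∀ m : ℕ, (m : ℂ) + α ≠ 0) :
    α * (∑' n : ℕ, (-(x : ℂ)) ^ n / ((Nat.factorial n : ℂ) * ((n : ℂ) + α))) =
      x * (∑' n : ℕ, (-(x : ℂ)) ^ n / ((Nat.factorial n : ℂ) * ((n : ℂ) + (α + 1)))) +
        Complex.exp (-x) := by
  have s1 := (aux_sum x α).of_norm.hasSum.mul_left α
  have s2 := (aux_sum x (α + 1)).of_norm.hasSum.mul_left (x : ℂ)
  have s3 := (aux_exp (-(x : ℂ))).sub s1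
  rw [← hasSum_nat_add_iff' 1] at s3
  have hf : (fun n : ℕ =>
      (x : ℂ) * ((-(x : ℂ)) ^ n / ((Nat.factorial n : ℂ) * ((n : ℂ) + (α + 1))))) =
      fun n : ℕ => -((-(x : ℂ)) ^ (n + 1) / ((n + 1).factorial : ℂ) -
        α * ((-(x : ℂ)) ^ (n + 1) / (((n + 1).factorial : ℂ) * (((n + 1 : ℕ) : ℂ) + α)))) := by
    funext n
    have h1 := hα (n + 1)
    have h2 : ((n : ℂ) + (α + 1)) ≠ 0 := by
      intro h; apply h1; push_cast; linear_combination h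
    have h3 : (Nat.factorial n : ℂ) ≠ 0 := by exact_mod_cast n.factorial_ne_zero
    have h4 : (n : ℂ) + 1 ≠ 0 := by exact_mod_cast n.succ_ne_zero
    rw [Nat.factorial_succ]
    push_cast at h1 ⊢
    field_simp
    ring
  rw [hf] at s2
  have e := s2.unique s3.neg
  have h0 : α ≠ 0 := by simpa using hα 0
  rw [e]
  simp [h0]

lemma aux_base (x : ℝ) (hx : 0 < x) (α : ℂ) (hα : 0 < α.re) :
    (∑' n : ℕ, (-(x : ℂ)) ^ n / ((Nat.factorial n : ℂ) * ((n : ℂ) + α))) +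
        (∫ t in Ioi (1 : ℝ), (t : ℂ) ^ (α - 1) * Real.exp (-x * t)) =
      Complex.exp (-α * Real.log x) * Complex.Gamma α := by
  have hr : -1 < (α - 1).re := by simp [hα]
  have hG := Complex.integral_cpow_mul_exp_neg_mul_Ioi hα hx
  have hx0 : (x : ℂ) ≠ 0 := by exact_mod_cast hx.ne'
  have hpow : (1 / (x : ℂ)) ^ α = Complex.exp (-α * Real.log x) := by
    rw [Complex.cpow_def_of_ne_zero (one_div_ne_zero hx0), one_div, ← Complex.ofReal_inv,
      ← Complex.ofReal_log (by positivity), Real.log_inv]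
    congr 1; push_cast; ring
  have i0 : IntegrableOn (fun t : ℝ => (t : ℂ) ^ (α - 1)) (Ioc 0 1) :=
    (intervalIntegrable_iff_integrableOn_Ioc_of_le zero_le_one).1
      (intervalIntegral.intervalIntegrable_cpow' hr)
  have i1 : IntegrableOn (fun t : ℝ => (t : ℂ) ^ (α - 1) * (Real.exp (-x * t) : ℂ)) (Ioc 0 1) :=
    (intervalIntegrable_iff_integrableOn_Ioc_of_le zero_le_one).1
      ((intervalIntegral.intervalIntegrable_cpow' hr).mul_continuousOn (by fun_prop))
  have hsplit := setIntegral_union (Ioc_disjoint_Ioi le_rfl) measurableSet_Ioi i1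
    (aux_int x hx (α - 1))
  rw [Ioc_union_Ioi_eq_Ioi zero_le_one] at hsplit
  let F : ℕ → ℝ → ℂ := fun n t => (-(x : ℂ)) ^ n / (Nat.factorial n : ℂ) * (t : ℂ) ^ ((n : ℂ) + α - 1)
  have hrn (n : ℕ) : -1 < ((n : ℂ) + α - 1).re := by
    have : (0 : ℝ) ≤ n := n.cast_nonneg
    simp; linarith
  have iF (n : ℕ) : Integrable (F n) (volume.restrict (Ioc 0 1)) :=
    ((intervalIntegrable_iff_integrableOn_Ioc_of_le zero_le_one).1
      (intervalIntegral.intervalIntegrable_cpow' (hrn n))).const_mul _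
  have hFeq (n : ℕ) (t : ℝ) (ht : t ∈ Ioc (0 : ℝ) 1) :
      F n t = (t : ℂ) ^ (α - 1) * ((-(x * t : ℂ)) ^ n / (Nat.factorial n : ℂ)) := by
    have ht0 : (t : ℂ) ≠ 0 := by exact_mod_cast ht.1.ne'
    simp only [F]
    rw [add_sub_assoc, Complex.cpow_add _ _ ht0, Complex.cpow_natCast, ← neg_mul, mul_pow]
    ring
  have hS : Summable fun n => ∫ t in Ioc (0 : ℝ) 1, ‖F n t‖ := by
    refine Summable.of_nonneg_of_le (fun n => integral_nonneg fun _ => norm_nonneg _) (fun n => ?_)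
      ((NormedSpace.norm_expSeries_div_summable (-(x : ℂ))).mul_right
        (∫ t in Ioc (0 : ℝ) 1, ‖(t : ℂ) ^ (α - 1)‖))
    rw [← integral_const_mul]
    refine setIntegral_mono_on (iF n).norm (i0.norm.const_mul _) measurableSet_Ioc ?_
    intro t ht
    simp only [F]
    rw [norm_mul]
    refine mul_le_mul_of_nonneg_left ?_ (norm_nonneg _)
    rw [Complex.norm_cpow_eq_rpow_re_of_pos ht.1, Complex.norm_cpow_eq_rpow_re_of_pos ht.1]
    refine Real.rpow_le_rpow_of_exponent_ge ht.1 ht.2 ?_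
    simp
  have hsum := (hasSum_integral_of_summable_integral_norm iF hS).tsum_eq
  have hL (n : ℕ) : ∫ t in Ioc (0 : ℝ) 1, F n t =
      (-(x : ℂ)) ^ n / ((Nat.factorial n : ℂ) * ((n : ℂ) + α)) := by
    have hne : (n : ℂ) + α ≠ 0 := by
      intro h
      have := hrn n
      rw [h] at this; simp at this
    rw [integral_const_mul, ← intervalIntegral.integral_of_le zero_le_one,
      integral_cpow (Or.inl (hrn n))]
    rw [sub_add_cancel, Complex.ofReal_one, Complex.ofReal_zero, Complex.one_cpow,
      Complex.zero_cpow hne, sub_zero, div_mul_div_comm, mul_one]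
  have hR : ∫ t in Ioc (0 : ℝ) 1, ∑' n, F n t =
      ∫ t in Ioc (0 : ℝ) 1, (t : ℂ) ^ (α - 1) * (Real.exp (-x * t) : ℂ) := by
    refine setIntegral_congr_fun measurableSet_Ioc fun t ht => ?_
    rw [tsum_congr (fun n => hFeq n t ht), tsum_mul_left, (aux_exp _).tsum_eq]
    push_cast
    rw [neg_mul]
  rw [← hpow, ← hG]
  simp_rw [← hL]
  rw [hsum, hR, ← hsplit]
  refine setIntegral_congr_fun measurableSet_Ioi fun t ht => ?_
  simp

lemma aux_main (x : ℝ) (hx : 0 < x) (k : ℕ) : ∀ (α : ℂ), (∀ m : ℕ, (m : ℂ) + α ≠ 0) →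
    0 < α.re + k →
    (∑' n : ℕ, (-(x : ℂ)) ^ n / ((Nat.factorial n : ℂ) * ((n : ℂ) + α))) +
        (∫ t in Ioi (1 : ℝ), (t : ℂ) ^ (α - 1) * Real.exp (-x * t)) =
      Complex.exp (-α * Real.log x) * Complex.Gamma α := by
  induction k with
  | zero => intro α _ h; exact aux_base x hx α (by simpa using h)
  | succ k ih =>
    intro α hα h
    have h0 : α ≠ 0 := by simpa using hα 0
    have IH := ih (α + 1) (fun m => by
      have := hα (m + 1); push_cast at this; intro h; apply this; linear_combination h)
      (by push_cast at h; simp; linarith)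
    apply mul_left_cancel₀ h0
    rw [mul_add, aux_recS x α hα, aux_recI x hx α h0]
    rw [Complex.Gamma_add_one α h0] at IH
    have hx1 : (x : ℂ) * Complex.exp (-(α + 1) * Real.log x) = Complex.exp (-α * Real.log x) := by
      have : (x : ℂ) = Complex.exp (Real.log x) := by
        rw [← Complex.ofReal_exp, Real.exp_log hx]
      conv_lhs => lhs; rw [this]
      rw [← Complex.exp_add]; congr 1; ring
    linear_combination (x : ℂ) * IH + α * Complex.Gamma α * hx1


/-- For real `x > 0` and `α ∈ ℂ` not a nonpositive integer,
`∑_{n≥0} (-x)^n / (n! (n + α)) + ∫_1^∞ t^(α-1) e^(-xt) dt = x^(-α) Γ(α)`,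
the series converging absolutely and the integral being absolutely convergent. -/
theorem stmt_11 (x : ℝ) (hx : 0 < x) (α : ℂ) (hα : ¬ ∃ m : ℕ, α = -(m : ℂ)) :
    (Summable fun n : ℕ => ‖(-(x : ℂ)) ^ n / ((Nat.factorial n : ℂ) * ((n : ℂ) + α))‖) ∧
    IntegrableOn (fun t : ℝ => (t : ℂ) ^ (α - 1) * Real.exp (-x * t)) (Ioi (1 : ℝ)) ∧
    (∑' n : ℕ, (-(x : ℂ)) ^ n / ((Nat.factorial n : ℂ) * ((n : ℂ) + α))) +
        (∫ t in Ioi (1 : ℝ), (t : ℂ) ^ (α - 1) * Real.exp (-x * t)) =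
      Complex.exp (-α * Real.log x) * Complex.Gamma α := by
  refine ⟨aux_sum x α, aux_int x hx (α - 1), ?_⟩
  obtain ⟨k, hk⟩ := exists_nat_gt (-α.re)
  refine aux_main x hx k α (fun m h => hα ⟨m, ?_⟩) (by linarith)
  linear_combination h
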